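/- For q a generic nonzero complex scalar (q = ±1 or not a root of unity), any semiring homomorphism f from the Grothendieck semiring R_+(O_q(SL(2))) to ℤ_+ is uniquely determined by the value f([V]), where V is any 2-dimensional simple O_q(SL(2))-comodule; the same holds with O_q(GL(2)) in place of O_q(SL(2)). -/

import Mathlib

/-!
Background definitions: comodules over a Hopf algebra, simple comodules, direct
summands, supports, subcoalgebras, cosemisimplicity, Gelfand-Kirillov dimension,
and (measured) Grothendieck semirings of cosemisimple Hopf algebras.
-/

open TensorProduct

/-- The data of a coaction of a Hopf algebra `H` on a `k`-vector space `X`: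
a linear map `ρ : X → X ⊗ H`.  The comodule axioms are recorded separately in
`Comod.IsComodule`. -/
structure Comod (k : Type) [Field k] (H : Type) [Ring H] [HopfAlgebra k H] : Type 1 where
  X : Type
  [addCommGroup : AddCommGroup X]
  [module : Module k X]
  ρ : X →ₗ[k] X ⊗[k] H

attribute [instance] Comod.addCommGroup Comod.module

namespace Comod

variable {k : Type} [Field k] {H : Type} [Ring H] [HopfAlgebra k H]

/-- The trivial `H`-comodule `𝟏`, i.e. `k` with coaction `x ↦ x ⊗ 1`. -/
noncomputable def unit (k : Type) [Field k] (H : Type) [Ring H] [HopfAlgebra k H] :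
    Comod k H where
  X := k
  ρ := (TensorProduct.mk k k H).flip 1

/-- The regular comodule: `H` coacting on itself by comultiplication. -/
noncomputable def regular (k : Type) [Field k] (H : Type) [Ring H] [HopfAlgebra k H] :
    Comod k H where
  X := H
  ρ := Coalgebra.comul

/-- Tensor product of comodules: the coaction on `M ⊗ N` is
`(id ⊗ id ⊗ μ_H) ∘ (id ⊗ τ ⊗ id) ∘ (ρ_M ⊗ ρ_N)`. -/
noncomputable def tensor (M N : Comod k H) : Comod k H where
  X := M.X ⊗[k] N.X
  ρ := (LinearMap.mul' k H).lTensor (M.X ⊗[k] N.X)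
        ∘ₗ (TensorProduct.tensorTensorTensorComm k M.X H N.X H).toLinearMap
        ∘ₗ TensorProduct.map M.ρ N.ρ

/-- Binary direct sum of comodules. -/
noncomputable def dsum (M N : Comod k H) : Comod k H where
  X := M.X × N.X
  ρ := (LinearMap.inl k M.X N.X).rTensor H ∘ₗ M.ρ ∘ₗ LinearMap.fst k M.X N.X
     + (LinearMap.inr k M.X N.X).rTensor H ∘ₗ N.ρ ∘ₗ LinearMap.snd k M.X N.X

/-- Finite direct sum of a family of comodules. -/
noncomputable def pi {ι : Type} [Fintype ι] (S : ι → Comod k H) : Comod k H where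
  X := ∀ i, (S i).X
  ρ := letI := Classical.decEq ι
    ∑ i : ι, (LinearMap.single k (fun j => (S j).X) i).rTensor H ∘ₗ (S i).ρ
        ∘ₗ LinearMap.proj i

/-- `n`-th tensor power of a comodule (`M^{⊗0} = 𝟏`, `M^{⊗1} = M`). -/
noncomputable def tpow (M : Comod k H) : ℕ → Comod k H
  | 0 => unit k H
  | 1 => M
  | n + 2 => (M.tpow (n + 1)).tensor M

/-- A linear map is a map of comodules if it intertwines the coactions. -/
def IsHom (M N : Comod k H) (f : M.X →ₗ[k] N.X) : Prop :=
  N.ρ ∘ₗ f = f.rTensor H ∘ₗ M.ρ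

/-- Isomorphism of comodules. -/
def Iso (M N : Comod k H) : Prop :=
  ∃ e : M.X ≃ₗ[k] N.X, IsHom M N e.toLinearMap

/-- The comodule axioms (coassociativity and counitality) for a coaction. -/
def IsComodule (M : Comod k H) : Prop :=
  (M.ρ.rTensor H ∘ₗ M.ρ =
      (TensorProduct.assoc k M.X H H).symm.toLinearMap
        ∘ₗ (Coalgebra.comul (R := k) (A := H)).lTensor M.X ∘ₗ M.ρ) ∧
  (TensorProduct.rid k M.X).toLinearMap
      ∘ₗ (Coalgebra.counit (R := k) (A := H)).lTensor M.X ∘ₗ M.ρ = LinearMap.id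

/-- A subspace `N ⊆ M` is a subcomodule if the coaction restricts to `N ⊗ H`. -/
def IsSubcomodule (M : Comod k H) (N : Submodule k M.X) : Prop :=
  ∀ x ∈ N, M.ρ x ∈ LinearMap.range (N.subtype.rTensor H)

/-- Simple (hence finite-dimensional) comodules. -/
def IsSimple (M : Comod k H) : Prop :=
  M.IsComodule ∧ Nontrivial M.X ∧ FiniteDimensional k M.X ∧
    ∀ N : Submodule k M.X, M.IsSubcomodule N → N = ⊥ ∨ N = ⊤

/-- `S` is a direct summand of `M` (as comodules): the inclusion splits. -/
def DirectSummand (S M : Comod k H) : Prop :=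
  ∃ (i : S.X →ₗ[k] M.X) (p : M.X →ₗ[k] S.X),
    IsHom S M i ∧ IsHom M S p ∧ p ∘ₗ i = LinearMap.id

/-- `C` is the support of the comodule `M`: the (unique) minimal subspace
`C ⊆ H` with `ρ(M) ⊆ M ⊗ C`. -/
def IsSupport (M : Comod k H) (C : Submodule k H) : Prop :=
  (∀ x : M.X, M.ρ x ∈ LinearMap.range (C.subtype.lTensor M.X)) ∧
    ∀ C' : Submodule k H,
      (∀ x : M.X, M.ρ x ∈ LinearMap.range (C'.subtype.lTensor M.X)) → C ≤ C'

end Comod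

/-- A subspace `C ⊆ H` is a subcoalgebra if `Δ(C) ⊆ C ⊗ C`. -/
def IsSubcoalgebra (k : Type) [Field k] (H : Type) [Ring H] [HopfAlgebra k H]
    (C : Submodule k H) : Prop :=
  ∀ x ∈ C, Coalgebra.comul (R := k) x ∈
    LinearMap.range (TensorProduct.map C.subtype C.subtype)

/-- A simple subcoalgebra: a nonzero subcoalgebra with no proper nonzero
subcoalgebras. -/
def IsSimpleSubcoalgebra (k : Type) [Field k] (H : Type) [Ring H] [HopfAlgebra k H]
    (C : Submodule k H) : Prop :=
  IsSubcoalgebra k H C ∧ C ≠ ⊥ ∧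
    ∀ D : Submodule k H, D ≤ C → IsSubcoalgebra k H D → D = ⊥ ∨ D = C

/-- A Hopf algebra is cosemisimple if every subcomodule of every comodule is a
direct summand. -/
def IsCosemisimple (k : Type) [Field k] (H : Type) [Ring H] [HopfAlgebra k H] : Prop :=
  ∀ M : Comod k H, M.IsComodule →
    ∀ N : Submodule k M.X, M.IsSubcomodule N →
      ∃ N' : Submodule k M.X, M.IsSubcomodule N' ∧ IsCompl N N'

open scoped ENNReal in
/-- The Gelfand-Kirillov dimension of a `k`-algebra `A`:
`sup_V limsup_n log(dim V^n)/log n` over finite-dimensional subspaces `V ⊆ A`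
(for a finitely generated algebra this agrees with the value computed from any
finite-dimensional generating subspace containing `1`). -/
noncomputable def GKdim (k : Type) (A : Type) [Field k] [Ring A] [Algebra k A] : ℝ≥0∞ :=
  ⨆ (V : Submodule k A) (_ : FiniteDimensional k V),
    Filter.limsup
      (fun n : ℕ => ENNReal.ofReal
        (Real.log (Module.finrank k ↥(V ^ n)) / Real.log n)) Filter.atTop

/-- The (measured) Grothendieck semiring of a cosemisimple Hopf algebra `H`:
a commutative semiring `R` together with a class map `cls` on finite-dimensional
`H`-comodules which is constant on isomorphism classes, additive on direct sums,
multiplicative on tensor products, sends `𝟏` to `1`, and induces a bijection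
between iso-classes of finite-dimensional comodules and elements of `R`.
The dimension function `d_H` on `R_+(H)` is recovered as `cls M ↦ dim_k M`. -/
structure GrSemiring (k : Type) [Field k] (H : Type) [Ring H] [HopfAlgebra k H] :
    Type 1 where
  R : Type
  [commSemiring : CommSemiring R]
  cls : Comod k H → R
  cls_one : cls (Comod.unit k H) = 1
  cls_iso : ∀ M N : Comod k H, M.IsComodule → N.IsComodule →
    FiniteDimensional k M.X → FiniteDimensional k N.X → Comod.Iso M N → cls M = cls N
  cls_dsum : ∀ M N : Comod k H, M.IsComodule → N.IsComodule →
    FiniteDimensional k M.X → FiniteDimensional k N.X →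
      cls (M.dsum N) = cls M + cls N
  cls_tensor : ∀ M N : Comod k H, M.IsComodule → N.IsComodule →
    FiniteDimensional k M.X → FiniteDimensional k N.X →
      cls (M.tensor N) = cls M * cls N
  cls_surj : ∀ r : R, ∃ M : Comod k H, M.IsComodule ∧ FiniteDimensional k M.X ∧ cls M = r
  cls_inj : ∀ M N : Comod k H, M.IsComodule → N.IsComodule →
    FiniteDimensional k M.X → FiniteDimensional k N.X → cls M = cls N → Comod.Iso M N

attribute [instance] GrSemiring.commSemiring

/-!
Over a cosemisimple Hopf algebra every finite-dimensional comodule is a direct sum of simple ones,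
so the simple classes generate the Grothendieck semiring additively. The fusion rule
`V₁ ⊗ Vₙ₊₁ ≅ Vₙ₊₂ ⊕ Vₙ` is a three-term recursion which, after applying a homomorphism into a
semiring with cancellative addition, determines the image of `[Vₙ₊₂]` from those of `[V₁]`,
`[Vₙ₊₁]` and `[Vₙ]`. For `GL(2)` the classes `[V₀,ₘ]` are units, hence are sent to `1` when `1` is
the only unit of the target; the second index then does not affect the initial values of the
recursion.
-/

namespace Comod

variable {k : Type} [Field k] {H : Type} [Ring H] [HopfAlgebra k H] {M N P : Comod k H}

instance finiteDimensional_unit : FiniteDimensional k (unit k H).X :=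
  inferInstanceAs (FiniteDimensional k k)

instance finiteDimensional_dsum [FiniteDimensional k M.X] [FiniteDimensional k N.X] :
    FiniteDimensional k (M.dsum N).X :=
  inferInstanceAs (FiniteDimensional k (M.X × N.X))

theorem IsSimple.isComodule (hM : M.IsSimple) : M.IsComodule := hM.1

theorem IsSimple.finiteDimensional (hM : M.IsSimple) : FiniteDimensional k M.X := hM.2.2.1

theorem Iso.finrank_eq (h : Iso M N) : Module.finrank k M.X = Module.finrank k N.X :=
  h.elim fun e _ => e.finrank_eq

namespace IsHom

variable {f : M.X →ₗ[k] N.X}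

theorem rTensor_coaction_comp (hf : IsHom M N f) :
    (N.ρ.rTensor H ∘ₗ N.ρ) ∘ₗ f = (f.rTensor H).rTensor H ∘ₗ M.ρ.rTensor H ∘ₗ M.ρ := by
  rw [LinearMap.comp_assoc, hf, ← LinearMap.comp_assoc, ← LinearMap.rTensor_comp, hf,
    LinearMap.rTensor_comp, LinearMap.comp_assoc]

theorem lTensor_comul_comp (hf : IsHom M N f) :
    ((TensorProduct.assoc k N.X H H).symm.toLinearMap
        ∘ₗ (Coalgebra.comul (R := k) (A := H)).lTensor N.X ∘ₗ N.ρ) ∘ₗ f =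
      (f.rTensor H).rTensor H ∘ₗ (TensorProduct.assoc k M.X H H).symm.toLinearMap
        ∘ₗ (Coalgebra.comul (R := k) (A := H)).lTensor M.X ∘ₗ M.ρ := by
  have assoc_symm_natural : (TensorProduct.assoc k N.X H H).symm.toLinearMap
      ∘ₗ f.rTensor (H ⊗[k] H) =
        (f.rTensor H).rTensor H ∘ₗ (TensorProduct.assoc k M.X H H).symm.toLinearMap := by
    ext; rfl
  rw [LinearMap.comp_assoc, LinearMap.comp_assoc, hf,
    ← LinearMap.comp_assoc M.ρ, LinearMap.lTensor_comp_rTensor, ← LinearMap.rTensor_comp_lTensor,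
    LinearMap.comp_assoc, ← LinearMap.comp_assoc, assoc_symm_natural, LinearMap.comp_assoc]

theorem lTensor_counit_comp (hf : IsHom M N f) :
    ((TensorProduct.rid k N.X).toLinearMap
        ∘ₗ (Coalgebra.counit (R := k) (A := H)).lTensor N.X ∘ₗ N.ρ) ∘ₗ f =
      f ∘ₗ (TensorProduct.rid k M.X).toLinearMap
        ∘ₗ (Coalgebra.counit (R := k) (A := H)).lTensor M.X ∘ₗ M.ρ := by
  have rid_natural : (TensorProduct.rid k N.X).toLinearMap ∘ₗ f.rTensor k =
      f ∘ₗ (TensorProduct.rid k M.X).toLinearMap := by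
    ext; simp
  rw [LinearMap.comp_assoc, LinearMap.comp_assoc, hf,
    ← LinearMap.comp_assoc M.ρ, LinearMap.lTensor_comp_rTensor, ← LinearMap.rTensor_comp_lTensor,
    LinearMap.comp_assoc, ← LinearMap.comp_assoc, rid_natural, LinearMap.comp_assoc]

theorem coprod {g : P.X →ₗ[k] N.X} (hf : IsHom M N f) (hg : IsHom P N g) :
    IsHom (M.dsum P) N (f.coprod g) := by
  refine LinearMap.ext fun x => ?_
  change N.ρ (f x.1 + g x.2) = (f.coprod g).rTensor H
    ((LinearMap.inl k M.X P.X).rTensor H (M.ρ x.1) + (LinearMap.inr k M.X P.X).rTensor H (P.ρ x.2))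
  rw [map_add, map_add, ← LinearMap.rTensor_comp_apply, ← LinearMap.rTensor_comp_apply,
    LinearMap.coprod_inl, LinearMap.coprod_inr]
  exact congrArg₂ (· + ·) (LinearMap.congr_fun hf x.1) (LinearMap.congr_fun hg x.2)

end IsHom

theorem isHom_inl (M N : Comod k H) : IsHom M (M.dsum N) (LinearMap.inl k M.X N.X) := by
  refine LinearMap.ext fun x => ?_
  change (LinearMap.inl k M.X N.X).rTensor H (M.ρ x)
    + (LinearMap.inr k M.X N.X).rTensor H (N.ρ 0) = (LinearMap.inl k M.X N.X).rTensor H (M.ρ x)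
  rw [map_zero, map_zero, add_zero]

theorem isHom_inr (M N : Comod k H) : IsHom N (M.dsum N) (LinearMap.inr k M.X N.X) := by
  refine LinearMap.ext fun x => ?_
  change (LinearMap.inl k M.X N.X).rTensor H (M.ρ 0)
    + (LinearMap.inr k M.X N.X).rTensor H (N.ρ x) = (LinearMap.inr k M.X N.X).rTensor H (N.ρ x)
  rw [map_zero, map_zero, zero_add]

theorem isComodule_unit : (unit k H).IsComodule := by
  constructor <;> refine LinearMap.ext_ring ?_
  · change ((TensorProduct.mk k k H).flip 1).rTensor H (1 ⊗ₜ[k] 1) =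
      (TensorProduct.assoc k k H H).symm (Coalgebra.comul.lTensor k (1 ⊗ₜ[k] (1 : H)))
    simp [Algebra.TensorProduct.one_def]
  · change TensorProduct.rid k k (Coalgebra.counit.lTensor k (1 ⊗ₜ[k] (1 : H))) = 1
    simp

theorem IsComodule.of_injective {f : M.X →ₗ[k] N.X} (hN : N.IsComodule) (hf : IsHom M N f)
    (hinj : Function.Injective f) : M.IsComodule := by
  have hinj₂ : Function.Injective ((f.rTensor H).rTensor H) :=
    Module.Flat.rTensor_preserves_injective_linearMap _
      (Module.Flat.rTensor_preserves_injective_linearMap _ hinj)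
  constructor
  · rw [← LinearMap.cancel_left hinj₂, ← hf.rTensor_coaction_comp, hN.1, hf.lTensor_comul_comp]
  · rw [← LinearMap.cancel_left hinj, ← hf.lTensor_counit_comp, hN.2]
    rfl

theorem IsComodule.of_iso (hN : N.IsComodule) (h : Iso M N) : M.IsComodule :=
  h.elim fun e he => hN.of_injective he e.injective

theorem IsComodule.dsum (hM : M.IsComodule) (hN : N.IsComodule) : (M.dsum N).IsComodule := by
  have hl := isHom_inl M N
  have hr := isHom_inr M N
  constructor <;> refine LinearMap.prod_ext (M := M.X) (M₂ := N.X) ?_ ?_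
  · exact hl.rTensor_coaction_comp.trans
      ((congrArg _ hM.1).trans hl.lTensor_comul_comp.symm)
  · exact hr.rTensor_coaction_comp.trans
      ((congrArg _ hN.1).trans hr.lTensor_comul_comp.symm)
  · exact hl.lTensor_counit_comp.trans (congrArg _ hM.2)
  · exact hr.lTensor_counit_comp.trans (congrArg _ hN.2)

theorem iso_dsum_of_subsingleton [Subsingleton M.X] : Iso N (M.dsum N) := by
  refine ⟨LinearEquiv.ofBijective (LinearMap.inr k M.X N.X) ⟨LinearMap.inr_injective, ?_⟩,
    isHom_inr M N⟩
  exact fun x => ⟨x.2, Prod.ext (Subsingleton.elim _ _) rfl⟩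

section Restrict

variable {A B : Submodule k M.X}

theorem rTensor_subtype_injective (A : Submodule k M.X) :
    Function.Injective (A.subtype.rTensor H) :=
  Module.Flat.rTensor_preserves_injective_linearMap _ A.injective_subtype

/-- A subcomodule as a comodule in its own right: the coaction of `M` on `A` factors uniquely
through the injection `A ⊗ H → M ⊗ H`. -/
noncomputable def restrict (M : Comod k H) {A : Submodule k M.X} (hA : M.IsSubcomodule A) :
    Comod k H where
  X := A
  ρ := (LinearEquiv.ofInjective _ (rTensor_subtype_injective A)).symm.toLinearMap
    ∘ₗ (M.ρ ∘ₗ A.subtype).codRestrict _ fun x => hA x x.2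

instance finiteDimensional_restrict [FiniteDimensional k M.X] (hA : M.IsSubcomodule A) :
    FiniteDimensional k (M.restrict hA).X :=
  inferInstanceAs (FiniteDimensional k A)

theorem isHom_subtype (hA : M.IsSubcomodule A) : IsHom (M.restrict hA) M A.subtype :=
  LinearMap.ext fun x => (congrArg Subtype.val
    ((LinearEquiv.ofInjective _ (rTensor_subtype_injective A)).apply_symm_apply
      ⟨M.ρ x.1, hA x.1 x.2⟩)).symm

theorem IsComodule.restrict (hM : M.IsComodule) (hA : M.IsSubcomodule A) :
    (M.restrict hA).IsComodule :=
  hM.of_injective (isHom_subtype hA) A.injective_subtype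

theorem finrank_restrict_lt [FiniteDimensional k M.X] (hA : M.IsSubcomodule A) (h : A ≠ ⊤) :
    Module.finrank k (M.restrict hA).X < Module.finrank k M.X :=
  Submodule.finrank_lt h

theorem dsum_restrict_iso (hA : M.IsSubcomodule A) (hB : M.IsSubcomodule B) (h : IsCompl A B) :
    Iso ((M.restrict hA).dsum (M.restrict hB)) M :=
  ⟨Submodule.prodEquivOfIsCompl A B h, (isHom_subtype hA).coprod (isHom_subtype hB)⟩

end Restrict

theorem exists_isCompl_of_not_isSimple (hH : IsCosemisimple k H) (hM : M.IsComodule)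
    [FiniteDimensional k M.X] [Nontrivial M.X] (hns : ¬ M.IsSimple) :
    ∃ A B : Submodule k M.X, M.IsSubcomodule A ∧ M.IsSubcomodule B ∧ A ≠ ⊤ ∧ B ≠ ⊤ ∧
      IsCompl A B := by
  obtain ⟨A, hA, hbot, htop⟩ : ∃ A, M.IsSubcomodule A ∧ A ≠ ⊥ ∧ A ≠ ⊤ := by
    by_contra! h
    exact hns ⟨hM, ‹_›, ‹_›, fun A hA => or_iff_not_imp_left.2 (h A hA)⟩
  obtain ⟨B, hB, hAB⟩ := hH M hM A hA
  exact ⟨A, B, hA, hB, htop, fun hBtop => hbot (eq_bot_of_isCompl_top (hBtop ▸ hAB)), hAB⟩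

end Comod

namespace GrSemiring

open Comod

variable {k : Type} [Field k] {H : Type} [Ring H] [HopfAlgebra k H] (G : GrSemiring k H)
  {M N P : Comod k H}

theorem cls_eq_of_iso (hN : N.IsComodule) [FiniteDimensional k N.X] (h : Iso M N) :
    G.cls M = G.cls N :=
  have : FiniteDimensional k M.X := h.elim fun e _ => Module.Finite.equiv e.symm
  G.cls_iso M N (hN.of_iso h) hN this ‹_› h

section Fusion

variable {Q : Comod k H} [FiniteDimensional k M.X] [FiniteDimensional k N.X]
  [FiniteDimensional k P.X]

theorem cls_mul_cls_of_iso (hM : M.IsComodule) (hN : N.IsComodule) (hP : P.IsComodule)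
    (h : Iso (M.tensor N) P) : G.cls M * G.cls N = G.cls P := by
  rw [← G.cls_tensor M N hM hN ‹_› ‹_›, G.cls_eq_of_iso hP h]

theorem cls_mul_cls_of_iso_dsum [FiniteDimensional k Q.X] (hM : M.IsComodule) (hN : N.IsComodule)
    (hP : P.IsComodule) (hQ : Q.IsComodule) (h : Iso (M.tensor N) (P.dsum Q)) :
    G.cls M * G.cls N = G.cls P + G.cls Q := by
  rw [G.cls_mul_cls_of_iso hM hN (hP.dsum hQ) h, G.cls_dsum P Q hP hQ ‹_› ‹_›]

end Fusion

theorem cls_eq_zero_of_subsingleton (hM : M.IsComodule) [Subsingleton M.X] : G.cls M = 0 := by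
  obtain ⟨Z, hZ, _, hZ0⟩ := G.cls_surj 0
  calc G.cls M = G.cls M + G.cls Z := by rw [hZ0, add_zero]
    _ = G.cls (M.dsum Z) := (G.cls_dsum M Z hM hZ inferInstance ‹_›).symm
    _ = G.cls Z := (G.cls_eq_of_iso (hM.dsum hZ) iso_dsum_of_subsingleton).symm
    _ = 0 := hZ0

theorem cls_mem_closure_simple (hH : IsCosemisimple k H) (hM : M.IsComodule)
    [FiniteDimensional k M.X] : G.cls M ∈ AddSubmonoid.closure (G.cls '' {S | S.IsSimple}) := by
  induction hn : Module.finrank k M.X using Nat.strong_induction_on generalizing M with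
  | _ n ih =>
    subst hn
    cases subsingleton_or_nontrivial M.X with
    | inl _ => exact G.cls_eq_zero_of_subsingleton hM ▸ zero_mem _
    | inr _ =>
      by_cases hs : M.IsSimple
      · exact AddSubmonoid.subset_closure ⟨M, hs, rfl⟩
      · obtain ⟨A, B, hA, hB, hA', hB', hAB⟩ := exists_isCompl_of_not_isSimple hH hM hs
        rw [← G.cls_eq_of_iso hM (dsum_restrict_iso hA hB hAB),
          G.cls_dsum _ _ (hM.restrict hA) (hM.restrict hB) inferInstance inferInstance]
        exact add_mem (ih _ (finrank_restrict_lt hA hA') (hM.restrict hA) rfl)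
          (ih _ (finrank_restrict_lt hB hB') (hM.restrict hB) rfl)

theorem closure_cls_simple_eq_top (hH : IsCosemisimple k H) :
    AddSubmonoid.closure (G.cls '' {S | S.IsSimple}) = ⊤ := by
  refine eq_top_iff.2 fun r _ => ?_
  obtain ⟨M, hM, _, rfl⟩ := G.cls_surj r
  exact G.cls_mem_closure_simple hH hM

theorem ringHom_ext {S : Type*} [NonAssocSemiring S] (hH : IsCosemisimple k H) {f g : G.R →+* S}
    (h : ∀ M : Comod k H, M.IsSimple → f (G.cls M) = g (G.cls M)) : f = g :=
  RingHom.coe_addMonoidHom_injective <|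
    AddMonoidHom.eq_of_eqOn_denseM (G.closure_cls_simple_eq_top hH) <|
      Set.forall_mem_image.2 fun _ hM => h _ hM

end GrSemiring

theorem map_eq_map_of_three_term_recursion {R S ι : Type*} [NonAssocSemiring R] [NonAssocSemiring S]
    [IsRightCancelAdd S] {f g : R →+* S} {x : R} {c : ℕ → ι → R} (σ : ι → ι)
    (hc : ∀ n i, x * c (n + 1) i = c (n + 2) i + c n (σ i)) (hx : f x = g x)
    (h0 : ∀ i, f (c 0 i) = g (c 0 i)) (h1 : ∀ i, f (c 1 i) = g (c 1 i)) (n : ℕ) (i : ι) :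
    f (c n i) = g (c n i) := by
  induction n using Nat.twoStepInduction generalizing i with
  | zero => exact h0 i
  | one => exact h1 i
  | more n ih ih' =>
    refine add_right_cancel (b := g (c n (σ i))) ?_
    calc f (c (n + 2) i) + g (c n (σ i)) = f (x * c (n + 1) i) := by rw [hc, map_add, ih]
      _ = g (x * c (n + 1) i) := by rw [map_mul, map_mul, hx, ih']
      _ = g (c (n + 2) i) + g (c n (σ i)) := by rw [hc, map_add]

open Comod

variable {k : Type} [Field k] {H : Type} [Ring H] [HopfAlgebra k H]

/-- The comodules `V n` exhaust the simple ones up to isomorphism, with the dimensions and the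
Clebsch–Gordan rule of the simple comodules of `O_q(SL(2))` for generic `q`. -/
structure SL2FusionRules (V : ℕ → Comod k H) : Prop where
  isSimple : ∀ n, (V n).IsSimple
  finrank_eq : ∀ n, Module.finrank k (V n).X = n + 1
  exists_iso : ∀ M : Comod k H, M.IsSimple → ∃ n, Iso M (V n)
  unit_iso : Iso (V 0) (unit k H)
  fusion_iso : ∀ n, Iso ((V 1).tensor (V (n + 1))) ((V (n + 2)).dsum (V n))

namespace SL2FusionRules

variable {V : ℕ → Comod k H} (G : GrSemiring k H)

theorem isComodule (hV : SL2FusionRules V) (n : ℕ) : (V n).IsComodule := (hV.isSimple n).isComodule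

theorem finiteDimensional (hV : SL2FusionRules V) (n : ℕ) : FiniteDimensional k (V n).X :=
  (hV.isSimple n).finiteDimensional

theorem exists_cls_eq (hV : SL2FusionRules V) {M : Comod k H} (hM : M.IsSimple) :
    ∃ n, Module.finrank k M.X = n + 1 ∧ G.cls M = G.cls (V n) := by
  obtain ⟨n, hn⟩ := hV.exists_iso M hM
  have := hV.finiteDimensional
  exact ⟨n, hn.finrank_eq.trans (hV.finrank_eq n), G.cls_eq_of_iso (hV.isComodule n) hn⟩

theorem cls_zero (hV : SL2FusionRules V) : G.cls (V 0) = 1 :=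
  (G.cls_eq_of_iso isComodule_unit hV.unit_iso).trans G.cls_one

theorem cls_fusion (hV : SL2FusionRules V) (n : ℕ) :
    G.cls (V 1) * G.cls (V (n + 1)) = G.cls (V (n + 2)) + G.cls (V n) :=
  have := hV.finiteDimensional
  G.cls_mul_cls_of_iso_dsum (hV.isComodule _) (hV.isComodule _) (hV.isComodule _)
    (hV.isComodule _) (hV.fusion_iso n)

theorem ringHom_ext (hV : SL2FusionRules V) (hH : IsCosemisimple k H) {S : Type*}
    [NonAssocSemiring S] [IsRightCancelAdd S] {f g : G.R →+* S} {W : Comod k H} (hW : W.IsSimple)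
    (hW2 : Module.finrank k W.X = 2) (hfg : f (G.cls W) = g (G.cls W)) : f = g := by
  have hV1 : f (G.cls (V 1)) = g (G.cls (V 1)) := by
    obtain ⟨n, hn, hcls⟩ := hV.exists_cls_eq G hW
    obtain rfl : n = 1 := by omega
    rwa [← hcls]
  refine G.ringHom_ext hH fun M hM => ?_
  obtain ⟨n, -, hcls⟩ := hV.exists_cls_eq G hM
  rw [hcls]
  exact map_eq_map_of_three_term_recursion (c := fun n (_ : Unit) => G.cls (V n)) id
    (fun n _ => hV.cls_fusion G n) hV1 (fun _ => by simp only [hV.cls_zero G, map_one])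
    (fun _ => hV1) n ()

end SL2FusionRules

/-- The comodules `V n m` exhaust the simple ones up to isomorphism, with the dimensions and the
fusion rules of the simple comodules of `O_q(GL(2))` for generic `q`. The `V 0 m` are the powers of
the quantum determinant, which also appears as the shift `m + 1` in the Clebsch–Gordan rule. -/
structure GL2FusionRules (V : ℕ → ℤ → Comod k H) : Prop where
  isSimple : ∀ n m, (V n m).IsSimple
  finrank_eq : ∀ n m, Module.finrank k (V n m).X = n + 1
  exists_iso : ∀ M : Comod k H, M.IsSimple → ∃ n m, Iso M (V n m)
  unit_iso : Iso (V 0 0) (unit k H)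
  det_iso : ∀ m m', Iso ((V 0 m).tensor (V 0 m')) (V 0 (m + m'))
  twist_iso : ∀ m, Iso ((V 1 0).tensor (V 0 m)) (V 1 m)
  fusion_iso : ∀ n m, Iso ((V 1 0).tensor (V (n + 1) m)) ((V (n + 2) m).dsum (V n (m + 1)))

namespace GL2FusionRules

variable {V : ℕ → ℤ → Comod k H} (G : GrSemiring k H)

theorem isComodule (hV : GL2FusionRules V) (n : ℕ) (m : ℤ) : (V n m).IsComodule :=
  (hV.isSimple n m).isComodule

theorem finiteDimensional (hV : GL2FusionRules V) (n : ℕ) (m : ℤ) : FiniteDimensional k (V n m).X :=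
  (hV.isSimple n m).finiteDimensional

theorem exists_cls_eq (hV : GL2FusionRules V) {M : Comod k H} (hM : M.IsSimple) :
    ∃ n m, Module.finrank k M.X = n + 1 ∧ G.cls M = G.cls (V n m) := by
  obtain ⟨n, m, hnm⟩ := hV.exists_iso M hM
  have := hV.finiteDimensional
  exact ⟨n, m, hnm.finrank_eq.trans (hV.finrank_eq n m),
    G.cls_eq_of_iso (hV.isComodule n m) hnm⟩

theorem cls_zero_zero (hV : GL2FusionRules V) : G.cls (V 0 0) = 1 :=
  (G.cls_eq_of_iso isComodule_unit hV.unit_iso).trans G.cls_one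

theorem cls_zero_mul_cls_zero (hV : GL2FusionRules V) (m m' : ℤ) :
    G.cls (V 0 m) * G.cls (V 0 m') = G.cls (V 0 (m + m')) :=
  have := hV.finiteDimensional
  G.cls_mul_cls_of_iso (hV.isComodule _ _) (hV.isComodule _ _) (hV.isComodule _ _)
    (hV.det_iso m m')

theorem cls_one_mul_cls_zero (hV : GL2FusionRules V) (m : ℤ) :
    G.cls (V 1 0) * G.cls (V 0 m) = G.cls (V 1 m) :=
  have := hV.finiteDimensional
  G.cls_mul_cls_of_iso (hV.isComodule _ _) (hV.isComodule _ _) (hV.isComodule _ _)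
    (hV.twist_iso m)

theorem cls_fusion (hV : GL2FusionRules V) (n : ℕ) (m : ℤ) :
    G.cls (V 1 0) * G.cls (V (n + 1) m) = G.cls (V (n + 2) m) + G.cls (V n (m + 1)) :=
  have := hV.finiteDimensional
  G.cls_mul_cls_of_iso_dsum (hV.isComodule _ _) (hV.isComodule _ _) (hV.isComodule _ _)
    (hV.isComodule _ _) (hV.fusion_iso n m)

theorem isUnit_cls_zero (hV : GL2FusionRules V) (m : ℤ) : IsUnit (G.cls (V 0 m)) :=
  IsUnit.of_mul_eq_one (G.cls (V 0 (-m))) <| by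
    rw [hV.cls_zero_mul_cls_zero, add_neg_cancel, hV.cls_zero_zero]

variable {S : Type*} [Semiring S] [Subsingleton Sˣ]

theorem map_cls_zero (hV : GL2FusionRules V) (φ : G.R →+* S) (m : ℤ) : φ (G.cls (V 0 m)) = 1 :=
  isUnit_iff_eq_one.1 ((hV.isUnit_cls_zero G m).map φ)

theorem map_cls_one (hV : GL2FusionRules V) (φ : G.R →+* S) (m : ℤ) :
    φ (G.cls (V 1 m)) = φ (G.cls (V 1 0)) := by
  rw [← hV.cls_one_mul_cls_zero, map_mul, hV.map_cls_zero, mul_one]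

theorem ringHom_ext (hV : GL2FusionRules V) (hH : IsCosemisimple k H) [IsRightCancelAdd S]
    {f g : G.R →+* S} {W : Comod k H} (hW : W.IsSimple) (hW2 : Module.finrank k W.X = 2)
    (hfg : f (G.cls W) = g (G.cls W)) : f = g := by
  have hV1 : f (G.cls (V 1 0)) = g (G.cls (V 1 0)) := by
    obtain ⟨n, m, hn, hcls⟩ := hV.exists_cls_eq G hW
    obtain rfl : n = 1 := by omega
    rwa [hcls, hV.map_cls_one G f, hV.map_cls_one G g] at hfg
  refine G.ringHom_ext hH fun M hM => ?_
  obtain ⟨n, m, -, hcls⟩ := hV.exists_cls_eq G hM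
  rw [hcls]
  exact map_eq_map_of_three_term_recursion (c := fun n m => G.cls (V n m)) (· + 1)
    (hV.cls_fusion G) hV1 (fun m => by rw [hV.map_cls_zero, hV.map_cls_zero])
    (fun m => by rw [hV.map_cls_one G f, hV.map_cls_one G g, hV1]) n m

end GL2FusionRules

theorem stmt8_general (hH : IsCosemisimple k H) (G : GrSemiring k H) {S : Type*} [Semiring S]
    [IsRightCancelAdd S] (f g : G.R →+* S) (W : Comod k H) (hW : W.IsSimple)
    (hW2 : Module.finrank k W.X = 2) (hfg : f (G.cls W) = g (G.cls W)) :
    (∀ V : ℕ → Comod k H, SL2FusionRules V → f = g) ∧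
      (∀ V : ℕ → ℤ → Comod k H, GL2FusionRules V → Subsingleton Sˣ → f = g) :=
  ⟨fun _ hV => hV.ringHom_ext G hH hW hW2 hfg, fun _ hV _ => hV.ringHom_ext G hH hW hW2 hfg⟩

/-- Lemma 3.8 of the paper.  For generic `q`, a semiring
homomorphism from the Grothendieck semiring of `O_q(SL(2))` (resp. of
`O_q(GL(2))`) to `ℤ_+ = ℕ` is uniquely determined by its value on the class of
any `2`-dimensional simple comodule.

Here `O_q(SL(2))` (for generic `q`) is characterized as a cosemisimple Hopf
algebra over `ℂ` whose simple comodules are `V_0 = 𝟏, V_1, V_2, …` with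
`dim V_n = n + 1`, every simple comodule isomorphic to exactly one `V_n`,
and Clebsch-Gordan fusion `V_1 ⊗ V_{n+1} ≅ V_{n+2} ⊕ V_n`; similarly
`O_q(GL(2))` has simple comodules `V_{n,m}` (`n ∈ ℕ`, `m ∈ ℤ`) with
`dim V_{n,m} = n + 1`, `V_{0,0} = 𝟏`, `V_{0,m} ⊗ V_{0,m'} ≅ V_{0,m+m'}`,
`V_{1,0} ⊗ V_{0,m} ≅ V_{1,m}` and
`V_{1,0} ⊗ V_{n+1,m} ≅ V_{n+2,m} ⊕ V_{n,m+1}`. -/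
theorem stmt8 :
    (∀ (H : Type) [Ring H] [HopfAlgebra ℂ H],
      IsCosemisimple ℂ H →
      ∀ G : GrSemiring ℂ H, ∀ V : ℕ → Comod ℂ H,
        (∀ n, (V n).IsSimple) →
        (∀ n, Module.finrank ℂ (V n).X = n + 1) →
        (∀ M : Comod ℂ H, M.IsSimple → ∃ n, Comod.Iso M (V n)) →
        (∀ n m, Comod.Iso (V n) (V m) → n = m) →
        Comod.Iso (V 0) (Comod.unit ℂ H) →
        (∀ n, Comod.Iso ((V 1).tensor (V (n + 1))) ((V (n + 2)).dsum (V n))) →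
        ∀ f g : G.R →+* ℕ,
          ∀ W : Comod ℂ H, W.IsSimple → Module.finrank ℂ W.X = 2 →
            f (G.cls W) = g (G.cls W) → f = g) ∧
    (∀ (H : Type) [Ring H] [HopfAlgebra ℂ H],
      IsCosemisimple ℂ H →
      ∀ G : GrSemiring ℂ H, ∀ V : ℕ → ℤ → Comod ℂ H,
        (∀ n m, (V n m).IsSimple) →
        (∀ n m, Module.finrank ℂ (V n m).X = n + 1) →
        (∀ M : Comod ℂ H, M.IsSimple → ∃ n m, Comod.Iso M (V n m)) →
        (∀ n m n' m', Comod.Iso (V n m) (V n' m') → n = n' ∧ m = m') →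
        Comod.Iso (V 0 0) (Comod.unit ℂ H) →
        (∀ m m', Comod.Iso ((V 0 m).tensor (V 0 m')) (V 0 (m + m'))) →
        (∀ m, Comod.Iso ((V 1 0).tensor (V 0 m)) (V 1 m)) →
        (∀ n m, Comod.Iso ((V 1 0).tensor (V (n + 1) m))
            ((V (n + 2) m).dsum (V n (m + 1)))) →
        ∀ f g : G.R →+* ℕ,
          ∀ W : Comod ℂ H, W.IsSimple → Module.finrank ℂ W.X = 2 →
            f (G.cls W) = g (G.cls W) → f = g) := by
  constructor
  · intro H _ _ hH G V hsimple hdim hall _ hunit hfus f g W hW hW2 hfg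
    exact (stmt8_general hH G f g W hW hW2 hfg).1 V ⟨hsimple, hdim, hall, hunit, hfus⟩
  · intro H _ _ hH G V hsimple hdim hall _ hunit hdet htwist hfus f g W hW hW2 hfg
    exact (stmt8_general hH G f g W hW hW2 hfg).2 V
      ⟨hsimple, hdim, hall, hunit, hdet, htwist, hfus⟩ inferInstance
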